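/- Fix y ∈ ℝⁿ∖{0} and assume Π > 0 and Γ > 0 at the corresponding (s,s̄). Let B ∈ ℝ and B_1,…,B_n ∈ ℝ with B_iy^i = 0 be given. Then the system of algebraic equations ℓ_{ir}A^r = B_i (i = 1,…,n) and ℓ_rA^r = B has a unique solution A = (A^r) ∈ ℝⁿ, and it is given by A^i = (α_rA^r)·α^i + (α/Π)·B^i − (α/(ΠΓ))·(μ₁h^i + μ₂h̄^i), where B^i = a^{il}B_l, h^i = a^{il}h_l, h̄^i = a^{il}h̄_l, α^i = a^{il}α_l = y^i/α, μ₁ = [Ψ_ss + (g²−s̄²)J]·B_rb^r + [Ψ_ss̄ − (θ−ss̄)J]·B_rγ^r, μ₂ = [Ψ_s̄s̄ + (b²−s²)J]·B_rγ^r + [Ψ_ss̄ − (θ−ss̄)J]·B_rb^r, and α_rA^r = (1/Ψ)·{ B − (α/(ΠΓ))·( Ψ_s[Π + (θ−ss̄)Ψ_ss̄ + (g²−s̄²)Ψ_s̄s̄] − Ψ_s̄[(θ−ss̄)Ψ_ss + (g²−s̄²)Ψ_ss̄] )·B_rb^r − (α/(ΠΓ))·( Ψ_s̄[Π + (b²−s²)Ψ_ss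 + (θ−ss̄)Ψ_ss̄] − Ψ_s[(b²−s²)Ψ_ss̄ + (θ−ss̄)Ψ_s̄s̄] )·B_rγ^r }, with b^r = a^{rl}b_l, γ^r = a^{rl}γ_l. -/

import Mathlib

noncomputable section

open Set

/-- `a^{ij} u_i v_j` : the pairing of two covectors via the inverse matrix. -/
def quadInv {n : ℕ} (a : Matrix (Fin n) (Fin n) ℝ) (u v : Fin n → ℝ) : ℝ :=
  ∑ i, ∑ j, a⁻¹ i j * u i * v j

/-- `α(y) = √(a_{ij} y^i y^j)`. -/
def alph {n : ℕ} (a : Matrix (Fin n) (Fin n) ℝ) (y : Fin n → ℝ) : ℝ :=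
  Real.sqrt (∑ i, ∑ j, a i j * y i * y j)

/-- `v_i y^i`. -/
def oneForm {n : ℕ} (v y : Fin n → ℝ) : ℝ := ∑ i, v i * y i

/-- `s(y) = v_i y^i / α(y)`. -/
def sVar {n : ℕ} (a : Matrix (Fin n) (Fin n) ℝ) (v y : Fin n → ℝ) : ℝ :=
  oneForm v y / alph a y

/-- The (α,β,γ)-metric `F(y) = α·Ψ(s, s̄)`. -/
def Fm {n : ℕ} (a : Matrix (Fin n) (Fin n) ℝ) (bv gv : Fin n → ℝ)
    (Ψ : ℝ → ℝ → ℝ) (y : Fin n → ℝ) : ℝ :=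
  alph a y * Ψ (sVar a bv y) (sVar a gv y)

/-- Partial derivative of a function on `ℝⁿ` in the `i`-th coordinate direction. -/
def pd {n : ℕ} (f : (Fin n → ℝ) → ℝ) (y : Fin n → ℝ) (i : Fin n) : ℝ :=
  fderiv ℝ f y (Pi.single i 1)

/-- Second partial derivative. -/
def pd2 {n : ℕ} (f : (Fin n → ℝ) → ℝ) (y : Fin n → ℝ) (i j : Fin n) : ℝ :=
  pd (fun z => pd f z j) y i

/-- Partial derivative with respect to the first slot (`∂/∂s`). -/
def Ds (Ψ : ℝ → ℝ → ℝ) : ℝ → ℝ → ℝ := fun p q => deriv (fun u => Ψ u q) p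

/-- Partial derivative with respect to the second slot (`∂/∂s̄`). -/
def Dt (Ψ : ℝ → ℝ → ℝ) : ℝ → ℝ → ℝ := fun p q => deriv (fun v => Ψ p v) q

/-- `h_i = v_i − s·α_i`. -/
def hl {n : ℕ} (a : Matrix (Fin n) (Fin n) ℝ) (v y : Fin n → ℝ) (i : Fin n) : ℝ :=
  v i - sVar a v y * pd (alph a) y i

/-- Fundamental tensor `g_{ij} = ½ ∂²(F²)/∂yⁱ∂yʲ`. -/
def fundT {n : ℕ} (F : (Fin n → ℝ) → ℝ) (y : Fin n → ℝ) (i j : Fin n) : ℝ :=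
  (1 / 2) * pd2 (fun z => F z ^ 2) y i j

/-- `Π = Ψ − sΨ_s − s̄Ψ_s̄`. -/
def PiF (Ψ : ℝ → ℝ → ℝ) (p q : ℝ) : ℝ := Ψ p q - p * Ds Ψ p q - q * Dt Ψ p q

/-- `J = (Ψ_ss Ψ_s̄s̄ − Ψ_ss̄²)/Π`. -/
def JF (Ψ : ℝ → ℝ → ℝ) (p q : ℝ) : ℝ :=
  (Ds (Ds Ψ) p q * Dt (Dt Ψ) p q - Dt (Ds Ψ) p q ^ 2) / PiF Ψ p q

/-- `Γ`, with `B = b²`, `G = g²`, `Θ = θ` as real parameters. -/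
def GammaF (Ψ : ℝ → ℝ → ℝ) (B G Θ p q : ℝ) : ℝ :=
  PiF Ψ p q + (B - p ^ 2) * Ds (Ds Ψ) p q + (G - q ^ 2) * Dt (Dt Ψ) p q
    + 2 * (Θ - p * q) * Dt (Ds Ψ) p q
    + ((B - p ^ 2) * (G - q ^ 2) - (Θ - p * q) ^ 2) * JF Ψ p q

/-- `ρ = Ψ(Ψ − sΨ_s − s̄Ψ_s̄)`. -/
def rhoF (Ψ : ℝ → ℝ → ℝ) : ℝ → ℝ → ℝ := fun p q => Ψ p q * PiF Ψ p q

/-- `ρ₀ = ΨΨ_ss + Ψ_s²`. -/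
def rho0F (Ψ : ℝ → ℝ → ℝ) : ℝ → ℝ → ℝ := fun p q => Ψ p q * Ds (Ds Ψ) p q + Ds Ψ p q ^ 2

/-- `ρ̄₀ = ΨΨ_s̄s̄ + Ψ_s̄²`. -/
def rhobar0F (Ψ : ℝ → ℝ → ℝ) : ℝ → ℝ → ℝ := fun p q => Ψ p q * Dt (Dt Ψ) p q + Dt Ψ p q ^ 2

/-- `ρ₃ = ΨΨ_ss̄ + Ψ_sΨ_s̄`. -/
def rho3F (Ψ : ℝ → ℝ → ℝ) : ℝ → ℝ → ℝ :=
  fun p q => Ψ p q * Dt (Ds Ψ) p q + Ds Ψ p q * Dt Ψ p q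

/-- `ρ₁ = ΨΨ_s − sρ₀ − s̄ρ₃`. -/
def rho1F (Ψ : ℝ → ℝ → ℝ) : ℝ → ℝ → ℝ :=
  fun p q => Ψ p q * Ds Ψ p q - p * rho0F Ψ p q - q * rho3F Ψ p q

/-- `ρ̄₁ = ΨΨ_s̄ − s̄ρ̄₀ − sρ₃`. -/
def rhobar1F (Ψ : ℝ → ℝ → ℝ) : ℝ → ℝ → ℝ :=
  fun p q => Ψ p q * Dt Ψ p q - q * rhobar0F Ψ p q - p * rho3F Ψ p q

/-- `ρ₂ = −sρ₁ − s̄ρ̄₁`. -/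
def rho2F (Ψ : ℝ → ℝ → ℝ) : ℝ → ℝ → ℝ :=
  fun p q => -p * rho1F Ψ p q - q * rhobar1F Ψ p q

/-- `π₁ = Ψ_s̄Ψ_ss̄ − Ψ_sΨ_s̄s̄ + sΨJ`. -/
def pi1F (Ψ : ℝ → ℝ → ℝ) (p q : ℝ) : ℝ :=
  Dt Ψ p q * Dt (Ds Ψ) p q - Ds Ψ p q * Dt (Dt Ψ) p q + p * Ψ p q * JF Ψ p q

/-- `π₂ = Ψ_sΨ_ss̄ − Ψ_s̄Ψ_ss + s̄ΨJ`. -/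
def pi2F (Ψ : ℝ → ℝ → ℝ) (p q : ℝ) : ℝ :=
  Ds Ψ p q * Dt (Ds Ψ) p q - Dt Ψ p q * Ds (Ds Ψ) p q + q * Ψ p q * JF Ψ p q

/-!
Let `m = (α_i)`, `e = y / α`, so that `m(e) = 1`, and let `h`, `h̄` be the components of `b`, `γ`
orthogonal to `y`. The Hessian of `F` is
`α ℓ_{ij} = Π (a_{ij} - α_i α_j) + Ψ_ss h_i h_j + Ψ_ss̄ (h_i h̄_j + h̄_i h_j) + Ψ_s̄s̄ h̄_i h̄_j`,
which annihilates `y`. Hence `ℓ_{ir} A^r = B_i` only involves the tangential part `A - m(A) e`, on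
which `α a⁻¹ ℓ` acts as `Π` plus a perturbation with range in the span of `a⁻¹ h` and `a⁻¹ h̄`;
its determinant on that span is `Π Γ`, and a Cramer computation in the two unknowns `h(A)`,
`h̄(A)` inverts it. Since `ℓ = Ψ m + Ψ_s h + Ψ_s̄ h̄` and `h(e) = h̄(e) = 0`, the remaining
equation `ℓ_r A^r = B` is then linear in `m(A)` alone, with leading coefficient `Ψ`.
-/

/-- The endomorphism `w ↦ c₀ w + (c₁₁ φ(w) + c₁₂ ψ(w)) h + (c₁₂ φ(w) + c₂₂ ψ(w)) k`, a symmetric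
perturbation of rank at most two of a homothety. When `h`, `k` are the vectors dual to the
functionals `φ`, `ψ` for some symmetric bilinear form, the condition `symm` holds. -/
structure RankTwoUpdate (K V : Type*) [Field K] [AddCommGroup V] [Module K V] where
  (c₀ c₁₁ c₁₂ c₂₂ : K)
  (φ ψ : Module.Dual K V)
  (h k : V)
  symm : ψ h = φ k

namespace RankTwoUpdate

variable {K V : Type*} [Field K] [AddCommGroup V] [Module K V] (T : RankTwoUpdate K V)

/-- The action of a rank-two update on a vector. -/
def apply (w : V) : V :=
  T.c₀ • w + (T.c₁₁ * T.φ w + T.c₁₂ * T.ψ w) • T.h + (T.c₁₂ * T.φ w + T.c₂₂ * T.ψ w) • T.k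

/-- The determinant of the coefficient form `(c₁₁, c₁₂; c₁₂, c₂₂)`, divided by `c₀`. -/
def J : K := (T.c₁₁ * T.c₂₂ - T.c₁₂ ^ 2) / T.c₀

/-- The determinant of the update on the span of independent `h` and `k`, divided by `c₀`. -/
def Γ : K :=
  T.c₀ + T.φ T.h * T.c₁₁ + T.ψ T.k * T.c₂₂ + 2 * T.φ T.k * T.c₁₂
    + (T.φ T.h * T.ψ T.k - T.φ T.k ^ 2) * T.J

/-- The coefficient `μ₁` of `h` in the solution of `T.apply w = b`, up to the factor
`-1 / (c₀ Γ)`. -/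
def μ₁ (b : V) : K := (T.c₁₁ + T.ψ T.k * T.J) * T.φ b + (T.c₁₂ - T.φ T.k * T.J) * T.ψ b

/-- The coefficient `μ₂` of `k` in the solution of `T.apply w = b`, up to the factor
`-1 / (c₀ Γ)`. -/
def μ₂ (b : V) : K := (T.c₂₂ + T.φ T.h * T.J) * T.ψ b + (T.c₁₂ - T.φ T.k * T.J) * T.φ b

/-- The solution of `T.apply w = b`, valid when `c₀ ≠ 0` and `Γ ≠ 0`. -/
def solve (b : V) : V := T.c₀⁻¹ • b - (T.c₀ * T.Γ)⁻¹ • (T.μ₁ b • T.h + T.μ₂ b • T.k)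

variable {T}

lemma c₀_mul_J (hc₀ : T.c₀ ≠ 0) : T.c₀ * T.J = T.c₁₁ * T.c₂₂ - T.c₁₂ ^ 2 :=
  mul_div_cancel₀ _ hc₀

lemma φ_solve (hc₀ : T.c₀ ≠ 0) (hΓ : T.Γ ≠ 0) (b : V) :
    T.φ (T.solve b) = (T.c₀ * T.Γ)⁻¹ * ((T.c₀ + T.φ T.k * T.c₁₂ + T.ψ T.k * T.c₂₂) * T.φ b
      - (T.φ T.h * T.c₁₂ + T.φ T.k * T.c₂₂) * T.ψ b) := by
  simp only [solve, map_sub, map_add, map_smul, smul_eq_mul]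
  field_simp
  simp only [Γ, μ₁, μ₂]
  ring

lemma ψ_solve (hc₀ : T.c₀ ≠ 0) (hΓ : T.Γ ≠ 0) (b : V) :
    T.ψ (T.solve b) = (T.c₀ * T.Γ)⁻¹ * ((T.c₀ + T.φ T.h * T.c₁₁ + T.φ T.k * T.c₁₂) * T.ψ b
      - (T.φ T.k * T.c₁₁ + T.ψ T.k * T.c₁₂) * T.φ b) := by
  simp only [solve, map_sub, map_add, map_smul, smul_eq_mul, T.symm]
  field_simp
  simp only [Γ, μ₁, μ₂]
  ring

lemma apply_solve (hc₀ : T.c₀ ≠ 0) (hΓ : T.Γ ≠ 0) (b : V) : T.apply (T.solve b) = b := by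
  have coeff_h : T.c₁₁ * T.φ (T.solve b) + T.c₁₂ * T.ψ (T.solve b) = T.Γ⁻¹ * T.μ₁ b := by
    rw [φ_solve hc₀ hΓ, ψ_solve hc₀ hΓ]
    field_simp
    simp only [μ₁]
    linear_combination (T.φ T.k * T.ψ b - T.ψ T.k * T.φ b) * c₀_mul_J hc₀
  have coeff_k : T.c₁₂ * T.φ (T.solve b) + T.c₂₂ * T.ψ (T.solve b) = T.Γ⁻¹ * T.μ₂ b := by
    rw [φ_solve hc₀ hΓ, ψ_solve hc₀ hΓ]
    field_simp
    simp only [μ₂]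
    linear_combination (T.φ T.k * T.φ b - T.φ T.h * T.ψ b) * c₀_mul_J hc₀
  rw [apply, coeff_h, coeff_k, solve]
  match_scalars <;> field_simp <;> ring

lemma φ_apply (w : V) :
    T.φ (T.apply w) = (T.c₀ + T.φ T.h * T.c₁₁ + T.φ T.k * T.c₁₂) * T.φ w
      + (T.φ T.h * T.c₁₂ + T.φ T.k * T.c₂₂) * T.ψ w := by
  simp only [apply, map_add, map_smul, smul_eq_mul]
  ring

lemma ψ_apply (w : V) :
    T.ψ (T.apply w) = (T.φ T.k * T.c₁₁ + T.ψ T.k * T.c₁₂) * T.φ w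
      + (T.c₀ + T.φ T.k * T.c₁₂ + T.ψ T.k * T.c₂₂) * T.ψ w := by
  simp only [apply, map_add, map_smul, smul_eq_mul, T.symm]
  ring

lemma solve_apply (hc₀ : T.c₀ ≠ 0) (hΓ : T.Γ ≠ 0) (w : V) : T.solve (T.apply w) = w := by
  have μ₁_apply : T.μ₁ (T.apply w) = T.Γ * (T.c₁₁ * T.φ w + T.c₁₂ * T.ψ w) := by
    simp only [μ₁, φ_apply, ψ_apply, Γ]
    linear_combination (T.ψ T.k * T.φ w - T.φ T.k * T.ψ w) * c₀_mul_J hc₀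
  have μ₂_apply : T.μ₂ (T.apply w) = T.Γ * (T.c₁₂ * T.φ w + T.c₂₂ * T.ψ w) := by
    simp only [μ₂, φ_apply, ψ_apply, Γ]
    linear_combination (T.φ T.h * T.ψ w - T.φ T.k * T.φ w) * c₀_mul_J hc₀
  rw [solve, μ₁_apply, μ₂_apply, apply]
  match_scalars <;> field_simp <;> ring

theorem apply_eq_iff (hc₀ : T.c₀ ≠ 0) (hΓ : T.Γ ≠ 0) {w b : V} :
    T.apply w = b ↔ w = T.solve b :=
  ⟨fun hw => hw ▸ (solve_apply hc₀ hΓ w).symm, fun hw => hw ▸ apply_solve hc₀ hΓ b⟩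

lemma map_solve_eq_zero {m : Module.Dual K V} (hh : m T.h = 0) (hk : m T.k = 0) {b : V}
    (hb : m b = 0) : m (T.solve b) = 0 := by
  simp [solve, hh, hk, hb]

section Bordered

variable {m : Module.Dual K V} {e b : V} {κ κ₁ κ₂ B : K}

theorem bordered_system_iff (hc₀ : T.c₀ ≠ 0) (hΓ : T.Γ ≠ 0) (hκ : κ ≠ 0) (hφe : T.φ e = 0)
    (hψe : T.ψ e = 0) (A : V) :
    (T.apply (A - m A • e) = b ∧ κ * m A + κ₁ * T.φ A + κ₂ * T.ψ A = B) ↔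
      m A = κ⁻¹ * (B - κ₁ * T.φ (T.solve b) - κ₂ * T.ψ (T.solve b)) ∧
        A = m A • e + T.solve b := by
  rw [apply_eq_iff hc₀ hΓ, sub_eq_iff_eq_add', and_comm]
  refine and_congr_left fun hA => ?_
  have hφA : T.φ A = T.φ (T.solve b) := by rw [hA, map_add, map_smul, hφe]; simp
  have hψA : T.ψ A = T.ψ (T.solve b) := by rw [hA, map_add, map_smul, hψe]; simp
  rw [hφA, hψA, eq_inv_mul_iff_mul_eq₀ hκ]
  constructor <;> intro h <;> linear_combination h

theorem existsUnique_bordered_system (hc₀ : T.c₀ ≠ 0) (hΓ : T.Γ ≠ 0) (hκ : κ ≠ 0)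
    (hme : m e = 1) (hφe : T.φ e = 0) (hψe : T.ψ e = 0) (hmh : m T.h = 0) (hmk : m T.k = 0)
    (hmb : m b = 0) :
    ∃! A : V, T.apply (A - m A • e) = b ∧ κ * m A + κ₁ * T.φ A + κ₂ * T.ψ A = B := by
  simp only [bordered_system_iff hc₀ hΓ hκ hφe hψe]
  set r := κ⁻¹ * (B - κ₁ * T.φ (T.solve b) - κ₂ * T.ψ (T.solve b))
  have hm : m (r • e + T.solve b) = r := by simp [hme, map_solve_eq_zero hmh hmk hmb]
  exact ⟨r • e + T.solve b, ⟨hm, by rw [hm]⟩, fun A hA => hA.1 ▸ hA.2⟩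

end Bordered

end RankTwoUpdate

section Partials

variable {Φ : ℝ → ℝ → ℝ} {p q : ℝ}

lemma Ds_eq_fderiv (h : DifferentiableAt ℝ (Function.uncurry Φ) (p, q)) :
    Ds Φ p q = fderiv ℝ (Function.uncurry Φ) (p, q) (1, 0) :=
  (h.hasFDerivAt.comp_hasDerivAt (f := fun u => (u, q)) p
    ((hasDerivAt_id p).prodMk (hasDerivAt_const p q))).deriv

lemma Dt_eq_fderiv (h : DifferentiableAt ℝ (Function.uncurry Φ) (p, q)) :
    Dt Φ p q = fderiv ℝ (Function.uncurry Φ) (p, q) (0, 1) :=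
  (h.hasFDerivAt.comp_hasDerivAt (f := fun u => (p, u)) q
    ((hasDerivAt_const q p).prodMk (hasDerivAt_id q))).deriv

lemma hasFDerivAt_comp₂ {E : Type*} [NormedAddCommGroup E] [NormedSpace ℝ E] {f g : E → ℝ}
    {f' g' : E →L[ℝ] ℝ} {x : E} (hf : HasFDerivAt f f' x) (hg : HasFDerivAt g g' x)
    (hΦ : DifferentiableAt ℝ (Function.uncurry Φ) (f x, g x)) :
    HasFDerivAt (fun z => Φ (f z) (g z)) (Ds Φ (f x) (g x) • f' + Dt Φ (f x) (g x) • g') x := by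
  refine (hΦ.hasFDerivAt.comp (f := fun z => (f z, g z)) x (hf.prodMk hg)).congr_fderiv ?_
  ext v
  have split : f'.prod g' v = f' v • ((1 : ℝ), (0 : ℝ)) + g' v • ((0 : ℝ), (1 : ℝ)) := by simp
  rw [ContinuousLinearMap.comp_apply, split, map_add, map_smul, map_smul, ← Ds_eq_fderiv hΦ,
    ← Dt_eq_fderiv hΦ]
  simp [mul_comm]

lemma eventually_differentiableAt_uncurry (h : ContDiffAt ℝ 2 (Function.uncurry Φ) (p, q)) :
    ∀ᶠ x in nhds (p, q), DifferentiableAt ℝ (Function.uncurry Φ) x :=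
  (h.eventually (by simp)).mono fun _ hx => hx.differentiableAt (by simp)

lemma uncurry_Ds_eventuallyEq (h : ContDiffAt ℝ 2 (Function.uncurry Φ) (p, q)) :
    Function.uncurry (Ds Φ) =ᶠ[nhds (p, q)] fun x => fderiv ℝ (Function.uncurry Φ) x (1, 0) :=
  (eventually_differentiableAt_uncurry h).mono fun _ hx => Ds_eq_fderiv hx

lemma uncurry_Dt_eventuallyEq (h : ContDiffAt ℝ 2 (Function.uncurry Φ) (p, q)) :
    Function.uncurry (Dt Φ) =ᶠ[nhds (p, q)] fun x => fderiv ℝ (Function.uncurry Φ) x (0, 1) :=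
  (eventually_differentiableAt_uncurry h).mono fun _ hx => Dt_eq_fderiv hx

lemma differentiableAt_fderiv_uncurry (h : ContDiffAt ℝ 2 (Function.uncurry Φ) (p, q)) :
    DifferentiableAt ℝ (fderiv ℝ (Function.uncurry Φ)) (p, q) :=
  (h.fderiv_right (m := 1) (by norm_num)).differentiableAt (by simp)

lemma differentiableAt_uncurry_Ds (h : ContDiffAt ℝ 2 (Function.uncurry Φ) (p, q)) :
    DifferentiableAt ℝ (Function.uncurry (Ds Φ)) (p, q) :=
  ((differentiableAt_fderiv_uncurry h).clm_apply (by fun_prop)).congr_of_eventuallyEq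
    (uncurry_Ds_eventuallyEq h)

lemma differentiableAt_uncurry_Dt (h : ContDiffAt ℝ 2 (Function.uncurry Φ) (p, q)) :
    DifferentiableAt ℝ (Function.uncurry (Dt Φ)) (p, q) :=
  ((differentiableAt_fderiv_uncurry h).clm_apply (by fun_prop)).congr_of_eventuallyEq
    (uncurry_Dt_eventuallyEq h)

lemma Ds_Dt_comm (h : ContDiffAt ℝ 2 (Function.uncurry Φ) (p, q)) :
    Ds (Dt Φ) p q = Dt (Ds Φ) p q := by
  have h' := differentiableAt_fderiv_uncurry h
  rw [Ds_eq_fderiv (differentiableAt_uncurry_Dt h), Dt_eq_fderiv (differentiableAt_uncurry_Ds h),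
    (uncurry_Dt_eventuallyEq h).fderiv_eq, (uncurry_Ds_eventuallyEq h).fderiv_eq,
    fderiv_clm_apply h' (by fun_prop), fderiv_clm_apply h' (by fun_prop)]
  simpa using h.isSymmSndFDerivAt (by simp) (1, 0) (0, 1)

end Partials

section SquareMatrix

open Matrix

variable {ι R : Type*} [Fintype ι] [CommRing R] {a : Matrix ι ι R}

lemma dotProduct_mulVec_comm (ha : a.IsSymm) (u v : ι → R) : u ⬝ᵥ a *ᵥ v = v ⬝ᵥ a *ᵥ u := by
  rw [dotProduct_mulVec, ← mulVec_transpose, ha.eq, dotProduct_comm]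

lemma mulVec_eq_iff_eq_inv_mulVec [DecidableEq ι] (hdet : IsUnit a.det) {v w : ι → R} :
    a *ᵥ v = w ↔ v = a⁻¹ *ᵥ w := by
  constructor <;> rintro rfl
  · rw [mulVec_mulVec, nonsing_inv_mul _ hdet, one_mulVec]
  · rw [mulVec_mulVec, mul_nonsing_inv _ hdet, one_mulVec]

end SquareMatrix

section Riemannian

open Matrix

variable {n : ℕ} {a : Matrix (Fin n) (Fin n) ℝ} {f : (Fin n → ℝ) → ℝ} {v y : Fin n → ℝ}

/-- The identification of covectors with continuous linear functionals on `ℝⁿ`; it turns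
coordinate gradients into Fréchet derivatives. -/
def covectorCLM (n : ℕ) : (Fin n → ℝ) ≃ₗ[ℝ] ((Fin n → ℝ) →L[ℝ] ℝ) :=
  (dotProductEquiv ℝ (Fin n)).trans LinearMap.toContinuousLinearMap

lemma covectorCLM_apply (v w : Fin n → ℝ) : covectorCLM n v w = v ⬝ᵥ w := rfl

lemma pd_eq_of_hasFDerivAt (h : HasFDerivAt f (covectorCLM n v) y) : pd f y = v := by
  funext i
  rw [pd, h.fderiv, covectorCLM_apply, dotProduct_single_one]

lemma hasFDerivAt_oneForm (v y : Fin n → ℝ) : HasFDerivAt (oneForm v) (covectorCLM n v) y :=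
  (covectorCLM n v).hasFDerivAt

lemma alph_eq_sqrt (a : Matrix (Fin n) (Fin n) ℝ) (y : Fin n → ℝ) :
    alph a y = √(y ⬝ᵥ a *ᵥ y) := by
  simp only [alph, dotProduct, mulVec, Finset.mul_sum, mul_assoc, mul_left_comm]

lemma quadInv_eq_dotProduct (a : Matrix (Fin n) (Fin n) ℝ) (u v : Fin n → ℝ) :
    quadInv a u v = u ⬝ᵥ a⁻¹ *ᵥ v := by
  simp only [quadInv, dotProduct, mulVec, Finset.mul_sum, mul_assoc, mul_left_comm]

lemma hasFDerivAt_dotProduct_mulVec_self (ha : a.IsSymm) (y : Fin n → ℝ) :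
    HasFDerivAt (fun z => z ⬝ᵥ a *ᵥ z) (covectorCLM n ((2 : ℝ) • a *ᵥ y)) y := by
  have h := (toBilin' a).toContinuousBilinearMap.hasFDerivAt_of_bilinear
    (hasFDerivAt_id y) (hasFDerivAt_id y)
  refine (h.congr_fderiv ?_).congr_of_eventuallyEq (.of_eq ?_)
  · ext w
    simp [toBilin'_apply', covectorCLM_apply, dotProduct_mulVec_comm ha y, dotProduct_comm w,
      two_mul]
  · funext z
    simp [toBilin'_apply']

lemma hasFDerivAt_alph (ha : a.IsSymm) (hα : 0 < alph a y) :
    HasFDerivAt (alph a) (covectorCLM n ((alph a y)⁻¹ • a *ᵥ y)) y := by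
  have hq : y ⬝ᵥ a *ᵥ y ≠ 0 := by
    rw [alph_eq_sqrt, Real.sqrt_pos] at hα
    exact hα.ne'
  rw [funext (alph_eq_sqrt a)]
  refine ((hasFDerivAt_dotProduct_mulVec_self ha y).sqrt hq).congr_fderiv ?_
  rw [← map_smul, smul_smul]
  congr 2
  field_simp

lemma pd_alph (ha : a.IsSymm) (hα : 0 < alph a y) : pd (alph a) y = (alph a y)⁻¹ • a *ᵥ y :=
  pd_eq_of_hasFDerivAt (hasFDerivAt_alph ha hα)

lemma pd_alph_apply (ha : a.IsSymm) (hα : 0 < alph a y) (j : Fin n) :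
    pd (alph a) y j = sVar a (a j) y := by
  rw [pd_alph ha hα, sVar, div_eq_inv_mul]
  rfl

lemma hl_eq (a : Matrix (Fin n) (Fin n) ℝ) (v y : Fin n → ℝ) :
    hl a v y = v - sVar a v y • pd (alph a) y := rfl

lemma hasFDerivAt_sVar (ha : a.IsSymm) (hα : 0 < alph a y) (v : Fin n → ℝ) :
    HasFDerivAt (sVar a v) (covectorCLM n ((alph a y)⁻¹ • hl a v y)) y := by
  have h := (hasFDerivAt_oneForm v y).fun_mul
    ((hasDerivAt_inv hα.ne').comp_hasFDerivAt y (hasFDerivAt_alph ha hα))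
  refine (h.congr_fderiv ?_).congr_of_eventuallyEq
    (.of_eq (funext fun z => div_eq_mul_inv _ _))
  simp only [← map_smul, ← map_add, hl_eq, pd_alph ha hα, sVar, Function.comp_apply]
  congr 1
  match_scalars <;> field_simp

lemma continuous_alph (a : Matrix (Fin n) (Fin n) ℝ) : Continuous (alph a) := by
  unfold alph
  fun_prop

lemma eventually_alph_pos (hα : 0 < alph a y) : ∀ᶠ z in nhds y, 0 < alph a z :=
  (continuous_alph a).continuousAt.eventually_const_lt hα

lemma hasFDerivAt_pd_alph (ha : a.IsSymm) (hα : 0 < alph a y) (j : Fin n) :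
    HasFDerivAt (fun z => pd (alph a) z j) (covectorCLM n ((alph a y)⁻¹ • hl a (a j) y)) y :=
  (hasFDerivAt_sVar ha hα (a j)).congr_of_eventuallyEq
    ((eventually_alph_pos hα).mono fun _ hz => pd_alph_apply ha hz j)

lemma hasFDerivAt_hl (ha : a.IsSymm) (hα : 0 < alph a y) (v : Fin n → ℝ) (j : Fin n) :
    HasFDerivAt (fun z => hl a v z j)
      (covectorCLM n (-(alph a y)⁻¹ • (pd (alph a) y j • hl a v y + sVar a v y • hl a (a j) y)))
      y := by
  refine (((hasFDerivAt_sVar ha hα v).fun_mul (hasFDerivAt_pd_alph ha hα j)).const_sub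
    (v j)).congr_fderiv ?_
  simp only [← map_smul, ← map_add, ← map_neg]
  congr 1
  module

section Metric

variable {bv gv : Fin n → ℝ} {Ψ : ℝ → ℝ → ℝ}

theorem hasFDerivAt_Fm (ha : a.IsSymm) (hα : 0 < alph a y)
    (hΨ : DifferentiableAt ℝ (Function.uncurry Ψ) (sVar a bv y, sVar a gv y)) :
    HasFDerivAt (Fm a bv gv Ψ)
      (covectorCLM n (Ψ (sVar a bv y) (sVar a gv y) • pd (alph a) y
        + Ds Ψ (sVar a bv y) (sVar a gv y) • hl a bv y
        + Dt Ψ (sVar a bv y) (sVar a gv y) • hl a gv y)) y := by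
  refine ((hasFDerivAt_alph ha hα).fun_mul (hasFDerivAt_comp₂ (hasFDerivAt_sVar ha hα bv)
    (hasFDerivAt_sVar ha hα gv) hΨ)).congr_fderiv ?_
  simp only [← map_smul, ← map_add, pd_alph ha hα]
  congr 1
  match_scalars <;> field_simp

lemma eventually_pd_Fm (ha : a.IsSymm) (hα : 0 < alph a y)
    (hΨ : ContDiffAt ℝ 2 (Function.uncurry Ψ) (sVar a bv y, sVar a gv y)) :
    ∀ᶠ z in nhds y, pd (Fm a bv gv Ψ) z = Ψ (sVar a bv z) (sVar a gv z) • pd (alph a) z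
      + Ds Ψ (sVar a bv z) (sVar a gv z) • hl a bv z
      + Dt Ψ (sVar a bv z) (sVar a gv z) • hl a gv z := by
  have hs : ContinuousAt (fun z => (sVar a bv z, sVar a gv z)) y :=
    (hasFDerivAt_sVar ha hα bv).continuousAt.prodMk (hasFDerivAt_sVar ha hα gv).continuousAt
  filter_upwards [eventually_alph_pos hα, hs.eventually (eventually_differentiableAt_uncurry hΨ)]
    with z hz hΨz
  exact pd_eq_of_hasFDerivAt (hasFDerivAt_Fm ha hz hΨz)

theorem hasFDerivAt_pd_Fm (ha : a.IsSymm) (hα : 0 < alph a y)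
    (hΨ : ContDiffAt ℝ 2 (Function.uncurry Ψ) (sVar a bv y, sVar a gv y)) (j : Fin n) :
    HasFDerivAt (fun z => pd (Fm a bv gv Ψ) z j)
      (covectorCLM n ((alph a y)⁻¹ • (PiF Ψ (sVar a bv y) (sVar a gv y) • hl a (a j) y
        + (Ds (Ds Ψ) (sVar a bv y) (sVar a gv y) * hl a bv y j
          + Dt (Ds Ψ) (sVar a bv y) (sVar a gv y) * hl a gv y j) • hl a bv y
        + (Dt (Ds Ψ) (sVar a bv y) (sVar a gv y) * hl a bv y j
          + Dt (Dt Ψ) (sVar a bv y) (sVar a gv y) * hl a gv y j) • hl a gv y))) y := by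
  have hs := hasFDerivAt_sVar ha hα bv
  have ht := hasFDerivAt_sVar ha hα gv
  have hΨα := (hasFDerivAt_comp₂ hs ht (hΨ.differentiableAt (by simp))).fun_mul
    (hasFDerivAt_pd_alph ha hα j)
  have hΨs := (hasFDerivAt_comp₂ hs ht (differentiableAt_uncurry_Ds hΨ)).fun_mul
    (hasFDerivAt_hl ha hα bv j)
  have hΨt := (hasFDerivAt_comp₂ hs ht (differentiableAt_uncurry_Dt hΨ)).fun_mul
    (hasFDerivAt_hl ha hα gv j)
  refine (((hΨα.fun_add hΨs).fun_add hΨt).congr_fderiv ?_).congr_of_eventuallyEq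
    ((eventually_pd_Fm ha hα hΨ).mono fun z hz => congrFun hz j)
  simp only [← map_smul, ← map_add, Ds_Dt_comm hΨ, PiF]
  congr 1
  module

theorem hessian_Fm (ha : a.IsSymm) (hα : 0 < alph a y)
    (hΨ : ContDiffAt ℝ 2 (Function.uncurry Ψ) (sVar a bv y, sVar a gv y)) :
    of (pd2 (Fm a bv gv Ψ) y) = (alph a y)⁻¹ •
      (PiF Ψ (sVar a bv y) (sVar a gv y) • (a - vecMulVec (pd (alph a) y) (pd (alph a) y))
        + vecMulVec (hl a bv y) (Ds (Ds Ψ) (sVar a bv y) (sVar a gv y) • hl a bv y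
          + Dt (Ds Ψ) (sVar a bv y) (sVar a gv y) • hl a gv y)
        + vecMulVec (hl a gv y) (Dt (Ds Ψ) (sVar a bv y) (sVar a gv y) • hl a bv y
          + Dt (Dt Ψ) (sVar a bv y) (sVar a gv y) • hl a gv y)) := by
  ext i j
  rw [of_apply, pd2, pd_eq_of_hasFDerivAt (hasFDerivAt_pd_Fm ha hα hΨ j), hl_eq a (a j),
    ← pd_alph_apply ha hα]
  simp only [Matrix.smul_apply, Matrix.add_apply, Matrix.sub_apply, Pi.smul_apply, Pi.add_apply,
    Pi.sub_apply, smul_eq_mul, vecMulVec_apply, ha.apply i j]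
  ring

lemma alph_pos (ha : a.PosDef) (hy : y ≠ 0) : 0 < alph a y := by
  rw [alph_eq_sqrt]
  exact Real.sqrt_pos.2 (ha.dotProduct_mulVec_pos hy)

lemma alph_sq (hα : 0 < alph a y) : alph a y ^ 2 = y ⬝ᵥ a *ᵥ y := by
  rw [alph_eq_sqrt] at hα ⊢
  exact Real.sq_sqrt (Real.sqrt_pos.1 hα).le

lemma pd_alph_dotProduct_self (ha : a.IsSymm) (hα : 0 < alph a y) :
    pd (alph a) y ⬝ᵥ y = alph a y := by
  rw [pd_alph ha hα, smul_dotProduct, dotProduct_comm, ← alph_sq hα, smul_eq_mul]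
  field_simp

lemma hl_dotProduct_self (ha : a.IsSymm) (hα : 0 < alph a y) (v : Fin n → ℝ) :
    hl a v y ⬝ᵥ y = 0 := by
  rw [hl_eq, sub_dotProduct, smul_dotProduct, pd_alph_dotProduct_self ha hα, sVar, smul_eq_mul,
    div_mul_cancel₀ _ hα.ne']
  exact sub_self _

lemma dotProduct_inv_mulVec_pd_alph (ha : a.IsSymm) (hdet : IsUnit a.det) (hα : 0 < alph a y)
    (v : Fin n → ℝ) : v ⬝ᵥ a⁻¹ *ᵥ pd (alph a) y = sVar a v y := by
  rw [pd_alph ha hα, mulVec_smul, mulVec_mulVec, nonsing_inv_mul _ hdet, one_mulVec,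
    dotProduct_smul, sVar, div_eq_inv_mul]
  rfl

lemma hl_dotProduct_inv_mulVec (ha : a.IsSymm) (hdet : IsUnit a.det) (hα : 0 < alph a y)
    (u v : Fin n → ℝ) :
    hl a u y ⬝ᵥ a⁻¹ *ᵥ v = v ⬝ᵥ a⁻¹ *ᵥ u - sVar a u y * sVar a v y := by
  rw [dotProduct_mulVec_comm ha.inv, hl_eq, mulVec_sub, mulVec_smul, dotProduct_sub,
    dotProduct_smul, dotProduct_inv_mulVec_pd_alph ha hdet hα, smul_eq_mul]

lemma sVar_eq_zero (hv : v ⬝ᵥ y = 0) : sVar a v y = 0 :=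
  (congrArg (· / alph a y) hv).trans (zero_div _)

lemma hl_dotProduct_inv_mulVec_hl (ha : a.IsSymm) (hdet : IsUnit a.det) (hα : 0 < alph a y)
    (u v : Fin n → ℝ) :
    hl a u y ⬝ᵥ a⁻¹ *ᵥ hl a v y = quadInv a u v - sVar a u y * sVar a v y := by
  rw [hl_dotProduct_inv_mulVec ha hdet hα, sVar_eq_zero (hl_dotProduct_self ha hα v),
    hl_dotProduct_inv_mulVec ha hdet hα, quadInv_eq_dotProduct]
  ring

/-- `α_r A^r`, as a functional of `A`: the radial component of `A`. -/
abbrev radial (a : Matrix (Fin n) (Fin n) ℝ) (y : Fin n → ℝ) : Module.Dual ℝ (Fin n → ℝ) :=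
  dotProductEquiv ℝ (Fin n) (pd (alph a) y)

lemma radial_unit (ha : a.IsSymm) (hα : 0 < alph a y) : radial a y ((alph a y)⁻¹ • y) = 1 := by
  rw [map_smul, dotProductEquiv_apply_apply, pd_alph_dotProduct_self ha hα, smul_eq_mul,
    inv_mul_cancel₀ hα.ne']

lemma radial_inv_mulVec (ha : a.IsSymm) (hdet : IsUnit a.det) (hα : 0 < alph a y)
    (hv : v ⬝ᵥ y = 0) : radial a y (a⁻¹ *ᵥ v) = 0 := by
  rw [dotProductEquiv_apply_apply, dotProduct_mulVec_comm ha.inv,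
    dotProduct_inv_mulVec_pd_alph ha hdet hα, sVar_eq_zero hv]

lemma hl_dotProduct_unit (ha : a.IsSymm) (hα : 0 < alph a y) (v : Fin n → ℝ) :
    hl a v y ⬝ᵥ (alph a y)⁻¹ • y = 0 := by
  rw [dotProduct_smul, hl_dotProduct_self ha hα, smul_zero]

/-- `α` times the Hessian of `F = α Ψ(s, s̄)` at `y`, with its first index raised by `a⁻¹` and
restricted to the vectors tangent to the level set of `α`, where it has rank-two form. -/
def hessianUpdate (ha : a.IsSymm) (bv gv : Fin n → ℝ) (Ψ : ℝ → ℝ → ℝ) (y : Fin n → ℝ) :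
    RankTwoUpdate ℝ (Fin n → ℝ) where
  c₀ := PiF Ψ (sVar a bv y) (sVar a gv y)
  c₁₁ := Ds (Ds Ψ) (sVar a bv y) (sVar a gv y)
  c₁₂ := Dt (Ds Ψ) (sVar a bv y) (sVar a gv y)
  c₂₂ := Dt (Dt Ψ) (sVar a bv y) (sVar a gv y)
  φ := dotProductEquiv ℝ (Fin n) (hl a bv y)
  ψ := dotProductEquiv ℝ (Fin n) (hl a gv y)
  h := a⁻¹ *ᵥ hl a bv y
  k := a⁻¹ *ᵥ hl a gv y
  symm := dotProduct_mulVec_comm ha.inv _ _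

theorem hessian_mulVec (ha : a.IsSymm) (hdet : IsUnit a.det) (hα : 0 < alph a y)
    (hΨ : ContDiffAt ℝ 2 (Function.uncurry Ψ) (sVar a bv y, sVar a gv y)) (A : Fin n → ℝ) :
    of (pd2 (Fm a bv gv Ψ) y) *ᵥ A = (alph a y)⁻¹ • a *ᵥ (hessianUpdate ha bv gv Ψ y).apply
      (A - (pd (alph a) y ⬝ᵥ A) • (alph a y)⁻¹ • y) := by
  have mulVec_inv (v : Fin n → ℝ) : a *ᵥ a⁻¹ *ᵥ v = v := (mulVec_eq_iff_eq_inv_mulVec hdet).2 rfl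
  have mulVec_tangent (c : ℝ) :
      a *ᵥ (A - c • (alph a y)⁻¹ • y) = a *ᵥ A - c • pd (alph a) y := by
    rw [mulVec_sub, mulVec_smul, mulVec_smul, pd_alph ha hα]
  have hl_tangent (v : Fin n → ℝ) (c : ℝ) :
      hl a v y ⬝ᵥ (A - c • (alph a y)⁻¹ • y) = hl a v y ⬝ᵥ A := by
    rw [dotProduct_sub, dotProduct_smul, hl_dotProduct_unit ha hα, smul_zero, sub_zero]
  simp only [hessian_Fm ha hα hΨ, RankTwoUpdate.apply, hessianUpdate, dotProductEquiv_apply_apply,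
    hl_tangent, smul_mulVec, add_mulVec, sub_mulVec, vecMulVec_mulVec, op_smul_eq_smul, mulVec_add,
    mulVec_smul, mulVec_tangent, mulVec_inv, add_dotProduct, smul_dotProduct, smul_eq_mul]

theorem system_iff (ha : a.IsSymm) (hdet : IsUnit a.det) (hα : 0 < alph a y)
    (hΨ : ContDiffAt ℝ 2 (Function.uncurry Ψ) (sVar a bv y, sVar a gv y)) {B : ℝ}
    {Bv A : Fin n → ℝ} :
    ((∀ i, ∑ r, pd2 (Fm a bv gv Ψ) y i r * A r = Bv i) ∧ ∑ r, pd (Fm a bv gv Ψ) y r * A r = B) ↔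
      (hessianUpdate ha bv gv Ψ y).apply (A - radial a y A • (alph a y)⁻¹ • y)
          = alph a y • a⁻¹ *ᵥ Bv ∧
        Ψ (sVar a bv y) (sVar a gv y) * radial a y A
          + Ds Ψ (sVar a bv y) (sVar a gv y) * (hessianUpdate ha bv gv Ψ y).φ A
          + Dt Ψ (sVar a bv y) (sVar a gv y) * (hessianUpdate ha bv gv Ψ y).ψ A = B := by
  have hpd := (eventually_pd_Fm ha hα hΨ).self_of_nhds
  refine and_congr ?_ ?_
  · change (∀ i, (of (pd2 (Fm a bv gv Ψ) y) *ᵥ A) i = Bv i) ↔ _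
    rw [← funext_iff, hessian_mulVec ha hdet hα hΨ, inv_smul_eq_iff₀ hα.ne',
      mulVec_eq_iff_eq_inv_mulVec hdet, mulVec_smul]
    rfl
  · change pd (Fm a bv gv Ψ) y ⬝ᵥ A = B ↔ _
    rw [hpd, add_dotProduct, add_dotProduct, smul_dotProduct, smul_dotProduct, smul_dotProduct]
    rfl

section Update

variable (ha : a.IsSymm) (hdet : IsUnit a.det) (hα : 0 < alph a y)
include hdet hα

lemma hessianUpdate_φ_h : (hessianUpdate ha bv gv Ψ y).φ (hessianUpdate ha bv gv Ψ y).h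
    = quadInv a bv bv - sVar a bv y ^ 2 :=
  (hl_dotProduct_inv_mulVec_hl ha hdet hα bv bv).trans (by rw [sq])

lemma hessianUpdate_φ_k : (hessianUpdate ha bv gv Ψ y).φ (hessianUpdate ha bv gv Ψ y).k
    = quadInv a bv gv - sVar a bv y * sVar a gv y :=
  hl_dotProduct_inv_mulVec_hl ha hdet hα bv gv

lemma hessianUpdate_ψ_k : (hessianUpdate ha bv gv Ψ y).ψ (hessianUpdate ha bv gv Ψ y).k
    = quadInv a gv gv - sVar a gv y ^ 2 :=
  (hl_dotProduct_inv_mulVec_hl ha hdet hα gv gv).trans (by rw [sq])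

lemma hessianUpdate_Γ : (hessianUpdate ha bv gv Ψ y).Γ
    = GammaF Ψ (quadInv a bv bv) (quadInv a gv gv) (quadInv a bv gv)
        (sVar a bv y) (sVar a gv y) := by
  rw [RankTwoUpdate.Γ, hessianUpdate_φ_h ha hdet hα, hessianUpdate_φ_k ha hdet hα,
    hessianUpdate_ψ_k ha hdet hα]
  rfl

lemma hessianUpdate_φ_inv_mulVec (hv : v ⬝ᵥ y = 0) :
    (hessianUpdate ha bv gv Ψ y).φ (a⁻¹ *ᵥ v) = v ⬝ᵥ a⁻¹ *ᵥ bv := by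
  refine (hl_dotProduct_inv_mulVec ha hdet hα bv v).trans ?_
  rw [sVar_eq_zero hv, mul_zero, sub_zero]

lemma hessianUpdate_ψ_inv_mulVec (hv : v ⬝ᵥ y = 0) :
    (hessianUpdate ha bv gv Ψ y).ψ (a⁻¹ *ᵥ v) = v ⬝ᵥ a⁻¹ *ᵥ gv := by
  refine (hl_dotProduct_inv_mulVec ha hdet hα gv v).trans ?_
  rw [sVar_eq_zero hv, mul_zero, sub_zero]

lemma hessianUpdate_μ₁ (hv : v ⬝ᵥ y = 0) (c : ℝ) :
    (hessianUpdate ha bv gv Ψ y).μ₁ (c • a⁻¹ *ᵥ v) = c *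
      ((Ds (Ds Ψ) (sVar a bv y) (sVar a gv y) + (quadInv a gv gv - sVar a gv y ^ 2)
          * JF Ψ (sVar a bv y) (sVar a gv y)) * (v ⬝ᵥ a⁻¹ *ᵥ bv)
        + (Dt (Ds Ψ) (sVar a bv y) (sVar a gv y)
          - (quadInv a bv gv - sVar a bv y * sVar a gv y) * JF Ψ (sVar a bv y) (sVar a gv y))
          * (v ⬝ᵥ a⁻¹ *ᵥ gv)) := by
  rw [RankTwoUpdate.μ₁, map_smul, map_smul, hessianUpdate_φ_inv_mulVec ha hdet hα hv,
    hessianUpdate_ψ_inv_mulVec ha hdet hα hv, hessianUpdate_φ_k ha hdet hα,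
    hessianUpdate_ψ_k ha hdet hα]
  simp only [RankTwoUpdate.J, hessianUpdate, JF, smul_eq_mul]
  ring

lemma hessianUpdate_μ₂ (hv : v ⬝ᵥ y = 0) (c : ℝ) :
    (hessianUpdate ha bv gv Ψ y).μ₂ (c • a⁻¹ *ᵥ v) = c *
      ((Dt (Dt Ψ) (sVar a bv y) (sVar a gv y) + (quadInv a bv bv - sVar a bv y ^ 2)
          * JF Ψ (sVar a bv y) (sVar a gv y)) * (v ⬝ᵥ a⁻¹ *ᵥ gv)
        + (Dt (Ds Ψ) (sVar a bv y) (sVar a gv y)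
          - (quadInv a bv gv - sVar a bv y * sVar a gv y) * JF Ψ (sVar a bv y) (sVar a gv y))
          * (v ⬝ᵥ a⁻¹ *ᵥ bv)) := by
  rw [RankTwoUpdate.μ₂, map_smul, map_smul, hessianUpdate_φ_inv_mulVec ha hdet hα hv,
    hessianUpdate_ψ_inv_mulVec ha hdet hα hv, hessianUpdate_φ_h ha hdet hα,
    hessianUpdate_φ_k ha hdet hα]
  simp only [RankTwoUpdate.J, hessianUpdate, JF, smul_eq_mul]
  ring

variable (hPi : PiF Ψ (sVar a bv y) (sVar a gv y) ≠ 0) (hΓ : (hessianUpdate ha bv gv Ψ y).Γ ≠ 0)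
include hPi hΓ

lemma hessianUpdate_φ_solve (hv : v ⬝ᵥ y = 0) (c : ℝ) :
    (hessianUpdate ha bv gv Ψ y).φ ((hessianUpdate ha bv gv Ψ y).solve (c • a⁻¹ *ᵥ v)) =
      c / (PiF Ψ (sVar a bv y) (sVar a gv y) * (hessianUpdate ha bv gv Ψ y).Γ) *
        ((PiF Ψ (sVar a bv y) (sVar a gv y)
            + (quadInv a bv gv - sVar a bv y * sVar a gv y) * Dt (Ds Ψ) (sVar a bv y) (sVar a gv y)
            + (quadInv a gv gv - sVar a gv y ^ 2) * Dt (Dt Ψ) (sVar a bv y) (sVar a gv y))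
            * (v ⬝ᵥ a⁻¹ *ᵥ bv)
          - ((quadInv a bv bv - sVar a bv y ^ 2) * Dt (Ds Ψ) (sVar a bv y) (sVar a gv y)
            + (quadInv a bv gv - sVar a bv y * sVar a gv y) * Dt (Dt Ψ) (sVar a bv y) (sVar a gv y))
            * (v ⬝ᵥ a⁻¹ *ᵥ gv)) := by
  rw [RankTwoUpdate.φ_solve hPi hΓ, map_smul, map_smul, hessianUpdate_φ_inv_mulVec ha hdet hα hv,
    hessianUpdate_ψ_inv_mulVec ha hdet hα hv, hessianUpdate_φ_h ha hdet hα,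
    hessianUpdate_φ_k ha hdet hα, hessianUpdate_ψ_k ha hdet hα]
  simp only [hessianUpdate, smul_eq_mul]
  ring

lemma hessianUpdate_ψ_solve (hv : v ⬝ᵥ y = 0) (c : ℝ) :
    (hessianUpdate ha bv gv Ψ y).ψ ((hessianUpdate ha bv gv Ψ y).solve (c • a⁻¹ *ᵥ v)) =
      c / (PiF Ψ (sVar a bv y) (sVar a gv y) * (hessianUpdate ha bv gv Ψ y).Γ) *
        ((PiF Ψ (sVar a bv y) (sVar a gv y)
            + (quadInv a bv bv - sVar a bv y ^ 2) * Ds (Ds Ψ) (sVar a bv y) (sVar a gv y)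
            + (quadInv a bv gv - sVar a bv y * sVar a gv y) * Dt (Ds Ψ) (sVar a bv y) (sVar a gv y))
            * (v ⬝ᵥ a⁻¹ *ᵥ gv)
          - ((quadInv a bv gv - sVar a bv y * sVar a gv y) * Ds (Ds Ψ) (sVar a bv y) (sVar a gv y)
            + (quadInv a gv gv - sVar a gv y ^ 2) * Dt (Ds Ψ) (sVar a bv y) (sVar a gv y))
            * (v ⬝ᵥ a⁻¹ *ᵥ bv)) := by
  rw [RankTwoUpdate.ψ_solve hPi hΓ, map_smul, map_smul, hessianUpdate_φ_inv_mulVec ha hdet hα hv,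
    hessianUpdate_ψ_inv_mulVec ha hdet hα hv, hessianUpdate_φ_h ha hdet hα,
    hessianUpdate_φ_k ha hdet hα, hessianUpdate_ψ_k ha hdet hα]
  simp only [hessianUpdate, smul_eq_mul]
  ring

end Update

end Metric

lemma sVar_sq_le (ha : a.PosDef) (hy : y ≠ 0) (v : Fin n → ℝ) :
    sVar a v y ^ 2 ≤ quadInv a v v := by
  have hdet : IsUnit a.det := ha.det_pos.ne'.isUnit
  have hnonneg : 0 ≤ hl a v y ⬝ᵥ a⁻¹ *ᵥ hl a v y :=
    ha.inv.posSemidef.dotProduct_mulVec_nonneg _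
  rw [hl_dotProduct_inv_mulVec_hl (isHermitian_iff_isSymm.1 ha.isHermitian) hdet
    (alph_pos ha hy)] at hnonneg
  linarith

lemma sVar_mem_Ioo (ha : a.PosDef) (hy : y ≠ 0) {c : ℝ} (hc : √(quadInv a v v) < c) :
    sVar a v y ∈ Ioo (-c) c :=
  abs_lt.1 ((Real.abs_le_sqrt (sVar_sq_le ha hy v)).trans_lt hc)

end Riemannian

open Matrix in
theorem statement11_general {n : ℕ} {a : Matrix (Fin n) (Fin n) ℝ} (ha : a.IsSymm)
    (hdet : IsUnit a.det) {bv gv : Fin n → ℝ} {Ψ : ℝ → ℝ → ℝ} {y : Fin n → ℝ}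
    (hα : 0 < alph a y)
    (hΨ : ContDiffAt ℝ 2 (Function.uncurry Ψ) (sVar a bv y, sVar a gv y))
    (hΨ₀ : Ψ (sVar a bv y) (sVar a gv y) ≠ 0)
    (hPi : PiF Ψ (sVar a bv y) (sVar a gv y) ≠ 0)
    (hΓ : GammaF Ψ (quadInv a bv bv) (quadInv a gv gv) (quadInv a bv gv)
        (sVar a bv y) (sVar a gv y) ≠ 0)
    (B : ℝ) {Bv : Fin n → ℝ} (hBv : ∑ i, Bv i * y i = 0) :
    (∃! A : Fin n → ℝ,
        (∀ i, ∑ r, pd2 (Fm a bv gv Ψ) y i r * A r = Bv i) ∧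
          (∑ r, pd (Fm a bv gv Ψ) y r * A r = B))
    ∧ (∀ A : Fin n → ℝ,
        ((∀ i, ∑ r, pd2 (Fm a bv gv Ψ) y i r * A r = Bv i) ∧
          (∑ r, pd (Fm a bv gv Ψ) y r * A r = B)) →
        ∀ p q Bq Gq Θq Brb Brg μ₁ μ₂ : ℝ,
          p = sVar a bv y → q = sVar a gv y →
          Bq = quadInv a bv bv → Gq = quadInv a gv gv → Θq = quadInv a bv gv →
          Brb = ∑ r, Bv r * (∑ l, a⁻¹ r l * bv l) →
          Brg = ∑ r, Bv r * (∑ l, a⁻¹ r l * gv l) →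
          μ₁ = (Ds (Ds Ψ) p q + (Gq - q ^ 2) * JF Ψ p q) * Brb
              + (Dt (Ds Ψ) p q - (Θq - p * q) * JF Ψ p q) * Brg →
          μ₂ = (Dt (Dt Ψ) p q + (Bq - p ^ 2) * JF Ψ p q) * Brg
              + (Dt (Ds Ψ) p q - (Θq - p * q) * JF Ψ p q) * Brb →
          ((∑ r, pd (alph a) y r * A r) =
            (1 / Ψ p q) *
              (B
                - (alph a y / (PiF Ψ p q * GammaF Ψ Bq Gq Θq p q)) *
                    (Ds Ψ p q *
                        (PiF Ψ p q + (Θq - p * q) * Dt (Ds Ψ) p q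
                          + (Gq - q ^ 2) * Dt (Dt Ψ) p q)
                      - Dt Ψ p q *
                        ((Θq - p * q) * Ds (Ds Ψ) p q
                          + (Gq - q ^ 2) * Dt (Ds Ψ) p q)) * Brb
                - (alph a y / (PiF Ψ p q * GammaF Ψ Bq Gq Θq p q)) *
                    (Dt Ψ p q *
                        (PiF Ψ p q + (Bq - p ^ 2) * Ds (Ds Ψ) p q
                          + (Θq - p * q) * Dt (Ds Ψ) p q)
                      - Ds Ψ p q *
                        ((Bq - p ^ 2) * Dt (Ds Ψ) p q
                          + (Θq - p * q) * Dt (Dt Ψ) p q)) * Brg))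
          ∧ (∀ i, A i =
              (∑ r, pd (alph a) y r * A r) * (y i / alph a y)
                + (alph a y / PiF Ψ p q) * (∑ l, a⁻¹ i l * Bv l)
                - (alph a y / (PiF Ψ p q * GammaF Ψ Bq Gq Θq p q)) *
                    (μ₁ * (∑ l, a⁻¹ i l * hl a bv y l)
                      + μ₂ * (∑ l, a⁻¹ i l * hl a gv y l)))) := by
  have hΓ' := (hessianUpdate_Γ (Ψ := Ψ) (bv := bv) (gv := gv) ha hdet hα).trans_ne hΓ
  have hunit := hl_dotProduct_unit ha hα
  refine ⟨?_, fun A hA p q Bq Gq Θq Brb Brg μ₁ μ₂ hp hq hBq hGq hΘq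
    (hBrb : Brb = Bv ⬝ᵥ a⁻¹ *ᵥ bv) (hBrg : Brg = Bv ⬝ᵥ a⁻¹ *ᵥ gv) hμ₁ hμ₂ => ?_⟩
  · simp only [system_iff ha hdet hα hΨ]
    exact RankTwoUpdate.existsUnique_bordered_system hPi hΓ' hΨ₀ (radial_unit ha hα) (hunit bv)
      (hunit gv) (radial_inv_mulVec ha hdet hα (hl_dotProduct_self ha hα bv))
      (radial_inv_mulVec ha hdet hα (hl_dotProduct_self ha hα gv))
      (by rw [map_smul, radial_inv_mulVec ha hdet hα hBv, smul_zero])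
  · subst hp hq hBq hGq hΘq hBrb hBrg hμ₁ hμ₂
    obtain ⟨hradial, htangent⟩ := (RankTwoUpdate.bordered_system_iff hPi hΓ' hΨ₀ (hunit bv)
      (hunit gv) A).1 ((system_iff ha hdet hα hΨ).1 hA)
    refine ⟨hradial.trans ?_, fun i => (congrFun htangent i).trans ?_⟩
    · rw [hessianUpdate_φ_solve ha hdet hα hPi hΓ' hBv,
        hessianUpdate_ψ_solve ha hdet hα hPi hΓ' hBv, hessianUpdate_Γ ha hdet hα]
      ring
    · rw [RankTwoUpdate.solve, hessianUpdate_μ₁ ha hdet hα hBv, hessianUpdate_μ₂ ha hdet hα hBv,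
        hessianUpdate_Γ ha hdet hα]
      simp only [hessianUpdate, Pi.add_apply, Pi.sub_apply, Pi.smul_apply, smul_eq_mul,
        dotProductEquiv_apply_apply]
      simp only [mulVec, dotProduct]
      ring

/-- unique solvability of the algebraic system `ℓ_{ir}A^r = B_i`, `ℓ_rA^r = B`. -/
theorem statement11
    (n : ℕ) (hn : 2 ≤ n)
    (a : Matrix (Fin n) (Fin n) ℝ) (ha : a.PosDef)
    (bv gv : Fin n → ℝ) (b₀ g₀ : ℝ) (hb₀ : 0 < b₀) (hg₀ : 0 < g₀)
    (hb : Real.sqrt (quadInv a bv bv) < b₀)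
    (hg : Real.sqrt (quadInv a gv gv) < g₀)
    (Ψ : ℝ → ℝ → ℝ)
    (hΨ : ContDiffOn ℝ (⊤ : ℕ∞) (fun p : ℝ × ℝ => Ψ p.1 p.2)
      (Set.Ioo (-b₀) b₀ ×ˢ Set.Ioo (-g₀) g₀))
    (hΨpos : ∀ p ∈ Set.Ioo (-b₀) b₀ ×ˢ Set.Ioo (-g₀) g₀, 0 < Ψ p.1 p.2)
    (y : Fin n → ℝ) (hy : y ≠ 0)
    (hPi : 0 < PiF Ψ (sVar a bv y) (sVar a gv y))
    (hΓ : 0 < GammaF Ψ (quadInv a bv bv) (quadInv a gv gv) (quadInv a bv gv)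
        (sVar a bv y) (sVar a gv y))
    (B : ℝ) (Bv : Fin n → ℝ) (hBv : ∑ i, Bv i * y i = 0) :
    (∃! A : Fin n → ℝ,
        (∀ i, ∑ r, pd2 (Fm a bv gv Ψ) y i r * A r = Bv i) ∧
          (∑ r, pd (Fm a bv gv Ψ) y r * A r = B))
    ∧ (∀ A : Fin n → ℝ,
        ((∀ i, ∑ r, pd2 (Fm a bv gv Ψ) y i r * A r = Bv i) ∧
          (∑ r, pd (Fm a bv gv Ψ) y r * A r = B)) →
        ∀ p q Bq Gq Θq Brb Brg μ₁ μ₂ : ℝ,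
          p = sVar a bv y → q = sVar a gv y →
          Bq = quadInv a bv bv → Gq = quadInv a gv gv → Θq = quadInv a bv gv →
          Brb = ∑ r, Bv r * (∑ l, a⁻¹ r l * bv l) →
          Brg = ∑ r, Bv r * (∑ l, a⁻¹ r l * gv l) →
          μ₁ = (Ds (Ds Ψ) p q + (Gq - q ^ 2) * JF Ψ p q) * Brb
              + (Dt (Ds Ψ) p q - (Θq - p * q) * JF Ψ p q) * Brg →
          μ₂ = (Dt (Dt Ψ) p q + (Bq - p ^ 2) * JF Ψ p q) * Brg
              + (Dt (Ds Ψ) p q - (Θq - p * q) * JF Ψ p q) * Brb →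
          ((∑ r, pd (alph a) y r * A r) =
            (1 / Ψ p q) *
              (B
                - (alph a y / (PiF Ψ p q * GammaF Ψ Bq Gq Θq p q)) *
                    (Ds Ψ p q *
                        (PiF Ψ p q + (Θq - p * q) * Dt (Ds Ψ) p q
                          + (Gq - q ^ 2) * Dt (Dt Ψ) p q)
                      - Dt Ψ p q *
                        ((Θq - p * q) * Ds (Ds Ψ) p q
                          + (Gq - q ^ 2) * Dt (Ds Ψ) p q)) * Brb
                - (alph a y / (PiF Ψ p q * GammaF Ψ Bq Gq Θq p q)) *
                    (Dt Ψ p q *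
                        (PiF Ψ p q + (Bq - p ^ 2) * Ds (Ds Ψ) p q
                          + (Θq - p * q) * Dt (Ds Ψ) p q)
                      - Ds Ψ p q *
                        ((Bq - p ^ 2) * Dt (Ds Ψ) p q
                          + (Θq - p * q) * Dt (Dt Ψ) p q)) * Brg))
          ∧ (∀ i, A i =
              (∑ r, pd (alph a) y r * A r) * (y i / alph a y)
                + (alph a y / PiF Ψ p q) * (∑ l, a⁻¹ i l * Bv l)
                - (alph a y / (PiF Ψ p q * GammaF Ψ Bq Gq Θq p q)) *
                    (μ₁ * (∑ l, a⁻¹ i l * hl a bv y l)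
                      + μ₂ * (∑ l, a⁻¹ i l * hl a gv y l)))) :=
  have hst : (sVar a bv y, sVar a gv y) ∈ Ioo (-b₀) b₀ ×ˢ Ioo (-g₀) g₀ :=
    ⟨sVar_mem_Ioo ha hy hb, sVar_mem_Ioo ha hy hg⟩
  have hΨ₂ : ContDiffAt ℝ 2 (Function.uncurry Ψ) (sVar a bv y, sVar a gv y) :=
    (hΨ.contDiffAt ((isOpen_Ioo.prod isOpen_Ioo).mem_nhds hst)).of_le
      (WithTop.coe_le_coe.2 (le_top : (2 : ℕ∞) ≤ ⊤))
  statement11_general (Matrix.isHermitian_iff_isSymm.1 ha.isHermitian) ha.det_pos.ne'.isUnit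
    (alph_pos ha hy) hΨ₂ (hΨpos _ hst).ne' hPi.ne' hΓ.ne' B hBv
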